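/- Let m ≥ 1 be an integer, let A_0, …, A_{m−1} > 1 and c_0, …, c_{m−1} > 0 be real numbers. Set β_{−1} = 1 and β_i = A_0·A_1⋯A_i for 0 ≤ i ≤ m−1, and put d_0 = s_{β_0} and d_i = g_{β_i, β_{i−1}} for 1 ≤ i ≤ m−1. Let S_m = { x ∈ (0,1) irrational : there are infinitely many n ∈ ℕ such that c_i·A_i^n ≤ a_{n+i}(x) < 2·c_i·A_i^n for every 0 ≤ i ≤ m−1 }. Then dim_H S_m ≤ min_{0 ≤ i ≤ m−1} d_i. -/

import Mathlib

open Filter MeasureTheory Set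

/-- The Gauss map `T(x) = 1/x - ⌊1/x⌋`. -/
noncomputable def gaussMap (x : ℝ) : ℝ := 1 / x - (⌊1 / x⌋ : ℤ)

/-- The `n`-th partial quotient `a_n(x)` (for `n ≥ 1`) of the continued
fraction expansion of `x`: `a_n(x) = ⌊1 / T^{n-1}(x)⌋`. -/
noncomputable def pq (x : ℝ) (n : ℕ) : ℕ := ⌊1 / (gaussMap^[n - 1] x)⌋₊

/-- The continuant `q_n(a_1, …, a_n)`: `q_0 = 1`, `q_1 = a_1`,
`q_k = a_k q_{k-1} + q_{k-2}`. -/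
def contQ : (n : ℕ) → (Fin n → ℕ) → ℕ
  | 0, _ => 1
  | 1, a => a 0
  | (n + 2), a =>
      a (Fin.last (n + 1)) * contQ (n + 1) (Fin.init a) +
        contQ n (Fin.init (Fin.init a))

/-- `s_B`: the Wang–Wu pressure exponent. -/
noncomputable def sExp (B : ℝ) : ℝ :=
  sInf {s : ℝ | 0 ≤ s ∧
    Filter.atTop.limsup (fun n : ℕ =>
      (((n : ℝ)⁻¹ : ℝ) : EReal) * ENNReal.log (∑' a : Fin n → ℕ+,
        ENNReal.ofReal ((B ^ n * ((contQ n fun i => (a i : ℕ)) : ℝ) ^ 2) ^ (-s)))) ≤ 0}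

/-- `g_{B₁,B₂}`: the two-parameter pressure exponent. -/
noncomputable def gExp (B₁ B₂ : ℝ) : ℝ :=
  sInf {s : ℝ | 0 ≤ s ∧
    Filter.atTop.limsup (fun n : ℕ =>
      (((n : ℝ)⁻¹ : ℝ) : EReal) * ENNReal.log (∑' a : Fin n → ℕ+,
        ENNReal.ofReal (B₂ ^ ((1 - s) * (n : ℝ)) *
          (B₁ ^ n * ((contQ n fun i => (a i : ℕ)) : ℝ) ^ 2) ^ (-s)))) ≤ 0}

/-- `β_i = A_0 ⋯ A_i`. -/
noncomputable def betaProd (A : ℕ → ℝ) (i : ℕ) : ℝ := ∏ j ∈ Finset.range (i + 1), A j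

/-- The dimensional numbers `d_0 = s_{β_0}` and `d_i = g_{β_i, β_{i-1}}` for `i ≥ 1`. -/
noncomputable def dimNum (A : ℕ → ℝ) (i : ℕ) : ℝ :=
  if i = 0 then sExp (betaProd A 0) else gExp (betaProd A i) (betaProd A (i - 1))

/-!
Fix `i < m` and write `β_i = A_0 ⋯ A_i`. If the window condition holds at time `n + 1`, then `x`
lies in the cylinder of some word `a` of length `n` followed by `i` digits taken from their
windows, and its next digit is at least a constant times `A_i ^ n`. For a given word `a` there
are `O(β_{i-1} ^ n)` such continuations, and the part of such a cylinder that meets the last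
condition has diameter at most a constant times `(q_n(a) ^ 2 * β_{i-1} ^ n * β_i ^ n)⁻¹`. The sum
of the `s`-th powers of these diameters is therefore at most a constant times the `n`-th pressure
sum of `g_{β_i, β_{i-1}}`.

Since continuants grow at least like `2 ^ (n / 2)`, the growth rate of the pressure sums is strictly
decreasing in `s`, hence negative above `d_i`. The covers of all stages together then have a finite
sum of `s`-th powers of diameters, and the convergence half of the Borel–Cantelli argument, applied
to Hausdorff measure, bounds the dimension of their limsup set by `s`.
-/

open ExpGrowth
open scoped ENNReal NNReal Topology

/-! ### Continuants -/

lemma last_mul_contQ_init_le {n : ℕ} (a : Fin (n + 1) → ℕ) :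
    a (Fin.last n) * contQ n (Fin.init a) ≤ contQ (n + 1) a := by
  cases n with
  | zero => simp [contQ]
  | succ n => exact Nat.le_add_right _ _

lemma contQ_mul_prod_le_contQ_append {n i : ℕ} (a : Fin n → ℕ) (b : Fin i → ℕ) :
    contQ n a * ∏ j, b j ≤ contQ (n + i) (Fin.append a b) := by
  induction i with
  | zero => simp [Fin.append_right_nil]
  | succ i ih =>
    have append_init : Fin.init (n := n + i) (Fin.append (n := i + 1) a b) =
        Fin.append a (Fin.init b) := by
      rw [← Fin.snoc_init_self b, Fin.append_snoc, Fin.init_snoc, Fin.init_snoc]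
    calc contQ n a * ∏ j, b j = b (Fin.last i) * (contQ n a * ∏ j, Fin.init b j) := by
          rw [Fin.prod_univ_castSucc]; simp only [Fin.init]; ring
      _ ≤ b (Fin.last i) * contQ (n + i) (Fin.append a (Fin.init b)) :=
          Nat.mul_le_mul_left _ (ih _)
      _ ≤ contQ (n + (i + 1)) (Fin.append a b) := by
          have last_mul_le := last_mul_contQ_init_le (n := n + i) (Fin.append (n := i + 1) a b)
          rwa [append_init, ← Fin.natAdd_last, Fin.append_right] at last_mul_le

lemma prod_le_contQ : ∀ {n : ℕ} (a : Fin n → ℕ), ∏ j, a j ≤ contQ n a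
  | 0, _ => by simp [contQ]
  | n + 1, a => by
    rw [Fin.prod_univ_castSucc, mul_comm]
    exact (Nat.mul_le_mul_left _ (prod_le_contQ (Fin.init a))).trans (last_mul_contQ_init_le a)

lemma contQ_pos {n : ℕ} {a : Fin n → ℕ} (ha : ∀ j, 0 < a j) : 0 < contQ n a :=
  (Finset.prod_pos fun j _ ↦ ha j).trans_le (prod_le_contQ a)

lemma contQ_init_le {n : ℕ} {a : Fin (n + 1) → ℕ} (ha : 0 < a (Fin.last n)) :
    contQ n (Fin.init a) ≤ contQ (n + 1) a :=
  (Nat.le_mul_of_pos_left _ ha).trans (last_mul_contQ_init_le a)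

lemma two_pow_le_two_mul_contQ_sq :
    ∀ {n : ℕ} {a : Fin n → ℕ}, (∀ j, 0 < a j) → 2 ^ n ≤ 2 * contQ n a ^ 2
  | 0, _, _ => by simp [contQ]
  | 1, a, ha => by simpa [contQ] using Nat.one_le_pow 2 _ (ha 0)
  | n + 2, a, ha => by
    have doubling : 2 * contQ n (Fin.init (Fin.init a)) ≤ contQ (n + 2) a := by
      rw [contQ, two_mul]
      gcongr
      exact (contQ_init_le (a := Fin.init a) (ha _)).trans (Nat.le_mul_of_pos_left _ (ha _))
    calc 2 ^ (n + 2) = 4 * 2 ^ n := by ring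
      _ ≤ 4 * (2 * contQ n (Fin.init (Fin.init a)) ^ 2) := by
          gcongr; exact two_pow_le_two_mul_contQ_sq fun j ↦ ha _
      _ = 2 * (2 * contQ n (Fin.init (Fin.init a))) ^ 2 := by ring
      _ ≤ 2 * contQ (n + 2) a ^ 2 := by gcongr

/-! ### The Gauss map and its cylinders -/

/-- The irrational numbers of the unit interval, the phase space of the Gauss map. -/
def unitIrrationals : Set ℝ := Ioo 0 1 ∩ {x | Irrational x}

lemma mul_pq_one_add_gaussMap {x : ℝ} (hx : 0 < x) : x * (pq x 1 + gaussMap x) = 1 := by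
  have floor_eq : (pq x 1 : ℝ) = (⌊1 / x⌋ : ℤ) := natCast_floor_eq_intCast_floor (by positivity)
  rw [floor_eq, gaussMap, add_sub_cancel, mul_one_div_cancel hx.ne']

lemma pq_iterate_gaussMap (x : ℝ) (k : ℕ) : pq (gaussMap^[k] x) 1 = pq x (k + 1) := rfl

lemma gaussMap_mapsTo_unitIrrationals : MapsTo gaussMap unitIrrationals unitIrrationals := by
  rintro x ⟨-, hx⟩
  have irrational_gaussMap : Irrational (gaussMap x) := by
    rw [gaussMap, one_div]
    exact hx.inv.sub_intCast _
  exact ⟨⟨(Int.fract_nonneg (1 / x)).lt_of_ne irrational_gaussMap.ne_zero.symm,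
    Int.fract_lt_one (1 / x)⟩, irrational_gaussMap⟩

lemma iterate_gaussMap_mem {x : ℝ} (hx : x ∈ unitIrrationals) (k : ℕ) :
    gaussMap^[k] x ∈ unitIrrationals :=
  gaussMap_mapsTo_unitIrrationals.iterate k hx

lemma iterate_gaussMap_pos {x : ℝ} (hx : x ∈ unitIrrationals) (k : ℕ) : 0 < gaussMap^[k] x :=
  (iterate_gaussMap_mem hx k).1.1

lemma iterate_gaussMap_mul {x : ℝ} (hx : x ∈ unitIrrationals) (k : ℕ) :
    gaussMap^[k] x * (pq x (k + 1) + gaussMap^[k + 1] x) = 1 := by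
  rw [Function.iterate_succ_apply', ← pq_iterate_gaussMap]
  exact mul_pq_one_add_gaussMap (iterate_gaussMap_pos hx k)

lemma pq_succ_pos {x : ℝ} (hx : x ∈ unitIrrationals) (k : ℕ) : 0 < pq x (k + 1) := by
  obtain ⟨⟨pos, lt_one⟩, -⟩ := iterate_gaussMap_mem hx k
  exact Nat.floor_pos.2 ((one_le_div pos).2 lt_one.le)

lemma iterate_gaussMap_mul_le_one {x M : ℝ} (hx : x ∈ unitIrrationals) {k : ℕ}
    (hM : M ≤ pq x (k + 1)) : gaussMap^[k] x * M ≤ 1 := by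
  rw [← iterate_gaussMap_mul hx k]
  have := (iterate_gaussMap_pos hx (k + 1)).le
  exact mul_le_mul_of_nonneg_left (by linarith) (iterate_gaussMap_pos hx k).le

/-- The product `x · T(x) ⋯ T^{k-1}(x)` along the Gauss orbit; its square is the contraction
factor of the inverse branch of `T^k` through `x`. -/
noncomputable def gaussProd (k : ℕ) (x : ℝ) : ℝ := ∏ j ∈ Finset.range k, gaussMap^[j] x

lemma gaussProd_pos {x : ℝ} (hx : x ∈ unitIrrationals) (k : ℕ) : 0 < gaussProd k x :=
  Finset.prod_pos fun j _ ↦ iterate_gaussMap_pos hx j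

/-- The cylinder of a finite word: the irrational points of the unit interval whose continued
fraction expansion begins with that word. -/
def gaussCylinder {k : ℕ} (w : Fin k → ℕ) : Set ℝ :=
  {x ∈ unitIrrationals | ∀ j : Fin k, pq x (j + 1) = w j}

section GaussCylinder

variable {k : ℕ} {x y : ℝ}

lemma mem_gaussCylinder_init {w : Fin (k + 1) → ℕ} (hx : x ∈ gaussCylinder w) :
    x ∈ gaussCylinder (Fin.init w) :=
  ⟨hx.1, fun j ↦ hx.2 j.castSucc⟩

lemma pq_eq_last_of_mem_gaussCylinder {w : Fin (k + 1) → ℕ} (hx : x ∈ gaussCylinder w) :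
    pq x (k + 1) = w (Fin.last k) :=
  hx.2 (Fin.last k)

lemma gaussProd_mul_contQ_add :
    ∀ {k : ℕ} {w : Fin (k + 1) → ℕ}, x ∈ gaussCylinder w →
      gaussProd (k + 1) x *
        (contQ (k + 1) w + gaussMap^[k + 1] x * contQ k (Fin.init w)) = 1
  | 0, w, hx => by
    simpa [gaussProd, contQ, ← hx.2 0] using iterate_gaussMap_mul hx.1 0
  | k + 1, w, hx => by
    have orbit := iterate_gaussMap_mul hx.1 (k + 1)
    rw [pq_eq_last_of_mem_gaussCylinder hx] at orbit
    have ih := gaussProd_mul_contQ_add (mem_gaussCylinder_init hx)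
    rw [gaussProd, Finset.prod_range_succ, ← gaussProd, contQ]
    push_cast
    linear_combination ih + gaussProd (k + 1) x * contQ (k + 1) (Fin.init w) * orbit

lemma gaussProd_mul_contQ_le_one {w : Fin k → ℕ} (hx : x ∈ gaussCylinder w) :
    gaussProd k x * contQ k w ≤ 1 := by
  cases k with
  | zero => simp [gaussProd, contQ]
  | succ k =>
    rw [← gaussProd_mul_contQ_add hx]
    have := (iterate_gaussMap_pos hx.1 (k + 1)).le
    exact mul_le_mul_of_nonneg_left (le_add_of_nonneg_right (by positivity))
      (gaussProd_pos hx.1 _).le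

lemma abs_sub_eq_of_mem_gaussCylinder {w : Fin k → ℕ} (hx : x ∈ gaussCylinder w)
    (hy : y ∈ gaussCylinder w) :
    |x - y| = gaussProd k x * gaussProd k y * |gaussMap^[k] x - gaussMap^[k] y| := by
  induction k with
  | zero => simp [gaussProd]
  | succ k ih =>
    have orbit_x := iterate_gaussMap_mul hx.1 k
    have orbit_y := iterate_gaussMap_mul hy.1 k
    rw [pq_eq_last_of_mem_gaussCylinder hx] at orbit_x
    rw [pq_eq_last_of_mem_gaussCylinder hy] at orbit_y
    have sub_eq : gaussMap^[k] x - gaussMap^[k] y =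
        gaussMap^[k] x * gaussMap^[k] y * (gaussMap^[k + 1] y - gaussMap^[k + 1] x) := by
      linear_combination gaussMap^[k] y * orbit_x - gaussMap^[k] x * orbit_y
    have pos_x := iterate_gaussMap_pos hx.1 k
    have pos_y := iterate_gaussMap_pos hy.1 k
    rw [ih (mem_gaussCylinder_init hx) (mem_gaussCylinder_init hy), sub_eq, abs_mul,
      abs_of_pos (mul_pos pos_x pos_y), abs_sub_comm]
    simp only [gaussProd, Finset.prod_range_succ]
    ring

lemma abs_sub_mul_le_one {w : Fin k → ℕ} {M : ℝ} (hM : 0 ≤ M)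
    (hx : x ∈ gaussCylinder w) (hxM : M ≤ pq x (k + 1)) (hy : y ∈ gaussCylinder w)
    (hyM : M ≤ pq y (k + 1)) : |x - y| * (contQ k w ^ 2 * M) ≤ 1 := by
  have prod_y := (gaussProd_pos hy.1 k).le
  have tail : |gaussMap^[k] x - gaussMap^[k] y| * M ≤ 1 := by
    have := mul_nonneg (iterate_gaussMap_pos hx.1 k).le hM
    have := mul_nonneg (iterate_gaussMap_pos hy.1 k).le hM
    have := iterate_gaussMap_mul_le_one hx.1 hxM
    have := iterate_gaussMap_mul_le_one hy.1 hyM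
    nth_rw 1 [← abs_of_nonneg hM]
    rw [← abs_mul, sub_mul, abs_le]
    constructor <;> linarith
  calc |x - y| * (contQ k w ^ 2 * M)
      = gaussProd k x * contQ k w * (gaussProd k y * contQ k w) *
          (|gaussMap^[k] x - gaussMap^[k] y| * M) := by
        rw [abs_sub_eq_of_mem_gaussCylinder hx hy]; ring
    _ ≤ 1 := mul_le_one₀ (mul_le_one₀ (gaussProd_mul_contQ_le_one hx) (by positivity)
        (gaussProd_mul_contQ_le_one hy)) (by positivity) tail

lemma ediam_gaussCylinder_inter_le {w : Fin k → ℕ} {Q M : ℝ} (hQ : 0 < Q) (hM : 0 < M)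
    (hQw : Q ≤ contQ k w) :
    Metric.ediam (gaussCylinder w ∩ {x | M ≤ pq x (k + 1)}) ≤ ENNReal.ofReal (Q ^ 2 * M)⁻¹ := by
  refine Metric.ediam_le_of_forall_dist_le ?_
  rintro x ⟨hx, hxM⟩ y ⟨hy, hyM⟩
  rw [Real.dist_eq, ← one_div, le_div_iff₀ (by positivity)]
  exact (by gcongr : _ ≤ |x - y| * (contQ k w ^ 2 * M)).trans
    (abs_sub_mul_le_one hM.le hx hxM hy hyM)

end GaussCylinder

/-! ### Hausdorff dimension of limsup sets -/

section HausdorffCantelli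

variable {X ι : Type*} [EMetricSpace X]

-- Convergence of the series forces the diameters of its tails to tend to zero, so the tails are
-- admissible covers.
lemma hausdorffMeasure_limsup_cofinite_eq_zero [MeasurableSpace X] [BorelSpace X] [Countable ι]
    {s : ℝ} (hs : 0 < s) {E : ι → Set X} (hE : ∑' i, Metric.ediam (E i) ^ s ≠ ∞) :
    μH[s] (limsup E cofinite) = 0 := by
  have tail_tendsto := ENNReal.tendsto_tsum_compl_atTop_zero hE
  have diam_tendsto : Tendsto
      (fun F : Finset ι ↦ (∑' i : {i // i ∉ F}, Metric.ediam (E i) ^ s) ^ s⁻¹) atTop (𝓝 0) := by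
    simpa [inv_pos.2 hs] using tail_tendsto.ennrpow_const s⁻¹
  have diam_le (F : Finset ι) (i : {i // i ∉ F}) :
      Metric.ediam (E i) ≤ (∑' i : {i // i ∉ F}, Metric.ediam (E i) ^ s) ^ s⁻¹ :=
    (ENNReal.le_rpow_inv_iff hs).2 (ENNReal.le_tsum i)
  have limsup_subset (F : Finset ι) : limsup E cofinite ⊆ ⋃ i : {i // i ∉ F}, E i := by
    rw [cofinite.limsup_set_eq]
    intro x hx
    obtain ⟨i, hxi, hiF⟩ := hx.exists_notMem_finset F
    exact mem_iUnion.2 ⟨⟨i, hiF⟩, hxi⟩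
  refine le_antisymm ?_ zero_le
  exact (Measure.hausdorffMeasure_le_liminf_tsum s _ _ diam_tendsto _ (.of_forall diam_le)
    (.of_forall limsup_subset)).trans_eq tail_tendsto.liminf_eq

lemma dimH_limsup_cofinite_le [Countable ι] {s : ℝ≥0} (hs : 0 < s) {E : ι → Set X}
    (hE : ∑' i, Metric.ediam (E i) ^ (s : ℝ) ≠ ∞) : dimH (limsup E cofinite) ≤ s := by
  borelize X
  refine dimH_le_of_hausdorffMeasure_ne_top ?_
  simp [hausdorffMeasure_limsup_cofinite_eq_zero (NNReal.coe_pos.2 hs) hE]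

end HausdorffCantelli

lemma exists_tsum_add_ne_top_of_expGrowthSup_neg {u : ℕ → ℝ≥0∞} (hu : expGrowthSup u < 0) :
    ∃ N, ∑' n, u (n + N) ≠ ∞ := by
  obtain ⟨b, hub, hb⟩ := exists_between hu
  obtain ⟨N, hN⟩ := eventually_atTop.1 (eventually_le_exp hub)
  refine ⟨N, ne_top_of_le_ne_top ?_ (ENNReal.tsum_le_tsum (g := fun n ↦ EReal.exp b ^ n) ?_)⟩
  · exact (tsum_geometric_lt_top.2 (EReal.exp_lt_one_iff.2 hb)).ne
  · intro n
    calc u (n + N) ≤ EReal.exp (b * (n + N : ℕ)) := hN _ (Nat.le_add_left N n)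
      _ = EReal.exp b ^ (n + N) := by rw [mul_comm, EReal.exp_nmul]
      _ ≤ EReal.exp b ^ n :=
        pow_le_pow_right_of_le_one' (EReal.exp_le_one_iff.2 hb.le) (Nat.le_add_right n N)

lemma dimH_limsup_iUnion_le {X : Type*} [EMetricSpace X] {κ : ℕ → Type*} [∀ n, Countable (κ n)]
    {s : ℝ≥0} (hs : 0 < s) {E : ∀ n, κ n → Set X}
    (hE : expGrowthSup (fun n ↦ ∑' k, Metric.ediam (E n k) ^ (s : ℝ)) < 0) :
    dimH (limsup (fun n ↦ ⋃ k, E n k) atTop) ≤ s := by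
  obtain ⟨N, hN⟩ := exists_tsum_add_ne_top_of_expGrowthSup_neg hE
  let E' : (Σ n, κ (n + N)) → Set X := fun p ↦ E (p.1 + N) p.2
  refine (dimH_mono ?_).trans (dimH_limsup_cofinite_le hs (E := E') ?_)
  · rw [← limsup_nat_add _ N, ← Nat.cofinite_eq_atTop, cofinite.limsup_set_eq,
      cofinite.limsup_set_eq]
    refine fun x hx ↦ Infinite.of_image Sigma.fst (hx.mono fun n hn ↦ ?_)
    obtain ⟨k, hk⟩ := mem_iUnion.1 hn
    exact ⟨⟨n, k⟩, hk, rfl⟩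
  · rwa [ENNReal.tsum_sigma']

/-! ### Pressure sums -/

lemma tsum_pi_prod_eq_pow {α : Type*} (f : α → ℝ≥0∞) (n : ℕ) :
    ∑' a : Fin n → α, ∏ j, f (a j) = (∑' x, f x) ^ n := by
  induction n with
  | zero => simp
  | succ n ih =>
    rw [← (Fin.consEquiv fun _ : Fin (n + 1) ↦ α).tsum_eq, ENNReal.tsum_prod', pow_succ', ← ih,
      ← ENNReal.tsum_mul_right]
    simp only [Fin.consEquiv, Equiv.coe_fn_mk, Fin.prod_univ_succ, Fin.cons_zero, Fin.cons_succ,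
      ENNReal.tsum_mul_left]

/-- The sum over all words of length `n` whose exponential growth rate in `n` is the pressure
defining `gExp B₁ B₂`. -/
noncomputable def wordSum (B₁ B₂ s : ℝ) (n : ℕ) : ℝ≥0∞ :=
  ∑' a : Fin n → ℕ+, ENNReal.ofReal (B₂ ^ ((1 - s) * (n : ℝ)) *
    (B₁ ^ n * (contQ n fun i ↦ (a i : ℕ) : ℝ) ^ 2) ^ (-s))

lemma gExp_eq_sInf_expGrowthSup (B₁ B₂ : ℝ) :
    gExp B₁ B₂ = sInf {s : ℝ | 0 ≤ s ∧ expGrowthSup (wordSum B₁ B₂ s) ≤ 0} := by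
  simp only [gExp, expGrowthSup, wordSum, EReal.div_eq_inv_mul, EReal.coe_inv,
    EReal.coe_coe_eq_natCast]

lemma sExp_eq_gExp_one (B : ℝ) : sExp B = gExp B 1 := by
  simp only [sExp, gExp, Real.one_rpow, one_mul]

lemma dimNum_eq_gExp (A : ℕ → ℝ) (i : ℕ) :
    dimNum A i = gExp (∏ j ∈ Finset.range (i + 1), A j) (∏ j ∈ Finset.range i, A j) := by
  cases i with
  | zero => simp [dimNum, betaProd, sExp_eq_gExp_one]
  | succ i => simp [dimNum, betaProd]

section WordSum

variable {B₁ B₂ : ℝ}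

-- Continuants grow at least like `2 ^ (n / 2)`, so raising the exponent costs an exponential factor
-- even when `B₁ = 1`.
lemma rpow_mul_rpow_neg_le (h₁ : 1 ≤ B₁) (h₂ : 1 ≤ B₂) {s t : ℝ} (hst : s ≤ t) {n : ℕ}
    {a : Fin n → ℕ} (ha : ∀ j, 0 < a j) :
    B₂ ^ ((1 - t) * (n : ℝ)) * (B₁ ^ n * (contQ n a : ℝ) ^ 2) ^ (-t) ≤
      2 ^ (t - s) * ((2 ^ (s - t)) ^ n *
        (B₂ ^ ((1 - s) * (n : ℝ)) * (B₁ ^ n * (contQ n a : ℝ) ^ 2) ^ (-s))) := by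
  have q_pos : (0 : ℝ) < contQ n a := mod_cast contQ_pos ha
  have base_ge : (2 : ℝ) ^ n / 2 ≤ B₁ ^ n * (contQ n a : ℝ) ^ 2 := by
    have : (2 : ℝ) ^ n ≤ 2 * (contQ n a : ℝ) ^ 2 := mod_cast two_pow_le_two_mul_contQ_sq ha
    nlinarith [one_le_pow₀ h₁ (n := n), sq_nonneg (contQ n a : ℝ)]
  set x := B₁ ^ n * (contQ n a : ℝ) ^ 2
  have x_pos : 0 < x := by positivity
  have two_rpow : ((2 : ℝ) ^ n / 2) ^ (s - t) = 2 ^ (t - s) * (2 ^ (s - t)) ^ n := by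
    rw [Real.div_rpow (by positivity) (by positivity), ← Real.rpow_natCast, ← Real.rpow_natCast,
      ← Real.rpow_mul (by positivity), ← Real.rpow_mul (by positivity), mul_comm (n : ℝ),
      div_eq_mul_inv, ← Real.rpow_neg (by positivity), neg_sub, mul_comm]
  calc B₂ ^ ((1 - t) * (n : ℝ)) * x ^ (-t)
      = B₂ ^ ((1 - t) * (n : ℝ)) * (x ^ (s - t) * x ^ (-s)) := by
        rw [← Real.rpow_add x_pos]; ring_nf
    _ ≤ B₂ ^ ((1 - s) * (n : ℝ)) * (((2 : ℝ) ^ n / 2) ^ (s - t) * x ^ (-s)) := by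
        have rpow_le : x ^ (s - t) ≤ ((2 : ℝ) ^ n / 2) ^ (s - t) :=
          Real.rpow_le_rpow_of_nonpos (by positivity) base_ge (sub_nonpos.2 hst)
        gcongr
    _ = _ := by rw [two_rpow]; ring

lemma expGrowthSup_wordSum_le (h₁ : 1 ≤ B₁) (h₂ : 1 ≤ B₂) {s t : ℝ} (hst : s ≤ t) :
    expGrowthSup (wordSum B₁ B₂ t) ≤
      ((s - t) * Real.log 2 : ℝ) + expGrowthSup (wordSum B₁ B₂ s) := by
  have growth_rate : expGrowthSup (fun n ↦ ENNReal.ofReal (2 ^ (s - t)) ^ n) =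
      ((s - t) * Real.log 2 : ℝ) := by
    rw [expGrowthSup_pow, ENNReal.log_ofReal_of_pos (by positivity), Real.log_rpow two_pos]
  rw [← growth_rate]
  refine (expGrowthSup_le_of_eventually_le (b := ENNReal.ofReal (2 ^ (t - s)))
    ENNReal.ofReal_ne_top (.of_forall fun n ↦ ?_)).trans
    (expGrowthSup_mul_le (.inl ?_) (.inl ?_))
  · rw [Pi.mul_apply, wordSum, wordSum, ← ENNReal.tsum_mul_left, ← ENNReal.tsum_mul_left]
    refine ENNReal.tsum_le_tsum fun a ↦ ?_
    rw [← ENNReal.ofReal_pow (by positivity), ← ENNReal.ofReal_mul (by positivity),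
      ← ENNReal.ofReal_mul (by positivity)]
    exact ENNReal.ofReal_le_ofReal (rpow_mul_rpow_neg_le h₁ h₂ hst fun j ↦ (a j).pos)
  · rw [growth_rate]; exact EReal.coe_ne_bot _
  · rw [growth_rate]; exact EReal.coe_ne_top _

lemma wordSum_one_le (h₁ : 1 ≤ B₁) (n : ℕ) :
    wordSum B₁ B₂ 1 n ≤ (∑' a : ℕ+, ENNReal.ofReal (((a : ℕ) : ℝ) ^ 2)⁻¹) ^ n := by
  rw [← tsum_pi_prod_eq_pow]
  refine ENNReal.tsum_le_tsum fun a ↦ ?_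
  rw [← ENNReal.ofReal_prod_of_nonneg fun _ _ ↦ by positivity]
  have prod_pos : (0 : ℝ) < ∏ j, ((a j : ℕ) : ℝ) :=
    Finset.prod_pos fun j _ ↦ mod_cast (a j).pos
  have prod_le : ∏ j, ((a j : ℕ) : ℝ) ≤ contQ n fun j ↦ (a j : ℕ) :=
    mod_cast prod_le_contQ fun j ↦ (a j : ℕ)
  refine ENNReal.ofReal_le_ofReal ?_
  rw [sub_self, zero_mul, Real.rpow_zero, one_mul, Real.rpow_neg_one, Finset.prod_inv_distrib,
    Finset.prod_pow]
  gcongr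
  exact (pow_le_pow_left₀ prod_pos.le prod_le 2).trans
    (le_mul_of_one_le_left (by positivity) (one_le_pow₀ h₁))

lemma expGrowthSup_wordSum_one_lt_top (h₁ : 1 ≤ B₁) :
    expGrowthSup (wordSum B₁ B₂ 1) < ⊤ := by
  have summable_inv_sq : Summable fun a : ℕ+ ↦ (((a : ℕ) : ℝ) ^ 2)⁻¹ :=
    (Real.summable_nat_pow_inv.2 one_lt_two).comp_injective PNat.coe_injective
  refine (expGrowthSup_monotone (wordSum_one_le h₁)).trans_lt ?_
  rw [expGrowthSup_pow, ENNReal.log_lt_top_iff, ← ENNReal.ofReal_tsum_of_nonneg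
    (fun _ ↦ by positivity) summable_inv_sq]
  exact ENNReal.ofReal_lt_top

lemma exists_expGrowthSup_wordSum_nonpos (h₁ : 1 ≤ B₁) (h₂ : 1 ≤ B₂) :
    ∃ s, 0 ≤ s ∧ expGrowthSup (wordSum B₁ B₂ s) ≤ 0 := by
  obtain ⟨C, hC, -⟩ := EReal.lt_iff_exists_real_btwn.1
    (expGrowthSup_wordSum_one_lt_top (B₂ := B₂) h₁)
  have log_two_pos := Real.log_pos one_lt_two
  refine ⟨1 + |C| / Real.log 2, by positivity, ?_⟩
  calc expGrowthSup (wordSum B₁ B₂ (1 + |C| / Real.log 2))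
      ≤ ((1 - (1 + |C| / Real.log 2)) * Real.log 2 : ℝ) + expGrowthSup (wordSum B₁ B₂ 1) :=
        expGrowthSup_wordSum_le h₁ h₂ (le_add_of_nonneg_right (by positivity))
    _ ≤ (-|C| : ℝ) + (C : ℝ) := by
        rw [sub_add_cancel_left, neg_mul, div_mul_cancel₀ _ log_two_pos.ne']
        gcongr
    _ ≤ 0 := mod_cast neg_add_nonpos_iff.2 (le_abs_self C)

lemma expGrowthSup_wordSum_neg (h₁ : 1 ≤ B₁) (h₂ : 1 ≤ B₂) {t : ℝ} (ht : gExp B₁ B₂ < t) :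
    expGrowthSup (wordSum B₁ B₂ t) < 0 := by
  rw [gExp_eq_sInf_expGrowthSup] at ht
  obtain ⟨s, ⟨-, hs⟩, hst⟩ :=
    exists_lt_of_csInf_lt (exists_expGrowthSup_wordSum_nonpos h₁ h₂) ht
  calc expGrowthSup (wordSum B₁ B₂ t)
      ≤ ((s - t) * Real.log 2 : ℝ) + expGrowthSup (wordSum B₁ B₂ s) :=
        expGrowthSup_wordSum_le h₁ h₂ hst.le
    _ ≤ ((s - t) * Real.log 2 : ℝ) + 0 := by gcongr
    _ < 0 := by
        rw [add_zero]
        exact mod_cast mul_neg_of_neg_of_pos (sub_neg.2 hst) (Real.log_pos one_lt_two)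

end WordSum

/-! ### Covers by cylinders with digits in prescribed windows -/

section Windows

variable {n i : ℕ}

/-- The words of length `i` whose `j`-th letter lies in the dyadic window `[L j, 2 * L j)`. -/
noncomputable def windowWords (L : Fin i → ℝ) : Finset (Fin i → ℕ) :=
  Fintype.piFinset fun j ↦ Finset.Ico ⌈L j⌉₊ ⌈2 * L j⌉₊

lemma mem_windowWords {L : Fin i → ℝ} {b : Fin i → ℕ} :
    b ∈ windowWords L ↔ ∀ j, L j ≤ b j ∧ b j < 2 * L j := by
  simp only [windowWords, Fintype.mem_piFinset, Finset.mem_Ico, Nat.ceil_le, Nat.lt_ceil]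

lemma card_windowWords_le {L : Fin i → ℝ} (hL : ∀ j, 0 ≤ L j) :
    ((windowWords L).card : ℝ) ≤ ∏ j, (L j + 1) := by
  rw [windowWords, Fintype.card_piFinset, Nat.cast_prod]
  refine Finset.prod_le_prod (fun _ _ ↦ by positivity) fun j _ ↦ ?_
  have ceil_le : ⌈L j⌉₊ ≤ ⌈2 * L j⌉₊ := Nat.ceil_mono (by linarith [hL j])
  rw [Nat.card_Ico, Nat.cast_sub ceil_le]
  linarith [Nat.le_ceil (L j), Nat.ceil_lt_add_one (mul_nonneg zero_le_two (hL j))]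

/-- The points of `unitIrrationals` whose expansion begins with the word `a` followed by the word
`b` and whose next partial quotient is at least `M`. -/
def windowPiece (a : Fin n → ℕ) (b : Fin i → ℕ) (M : ℝ) : Set ℝ :=
  gaussCylinder (Fin.append a b) ∩ {x | M ≤ pq x (n + i + 1)}

lemma ediam_windowPiece_le {L : Fin i → ℝ} (hL : ∀ j, 0 < L j) {M : ℝ} (hM : 0 < M)
    {a : Fin n → ℕ} (ha : ∀ j, 0 < a j) {b : Fin i → ℕ} (hb : b ∈ windowWords L) :
    Metric.ediam (windowPiece a b M) ≤ ENNReal.ofReal ((contQ n a * ∏ j, L j) ^ 2 * M)⁻¹ := by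
  have q_pos : (0 : ℝ) < contQ n a := mod_cast contQ_pos ha
  refine ediam_gaussCylinder_inter_le
    (mul_pos q_pos (Finset.prod_pos fun j _ ↦ hL j)) hM ?_
  calc (contQ n a : ℝ) * ∏ j, L j
      ≤ contQ n a * ∏ j, (b j : ℝ) := by
        gcongr with j
        · exact fun j _ ↦ (hL j).le
        · exact (mem_windowWords.1 hb j).1
    _ ≤ contQ (n + i) (Fin.append a b) := mod_cast contQ_mul_prod_le_contQ_append a b

lemma sum_ediam_windowPiece_rpow_le {L : Fin i → ℝ} (hL : ∀ j, 0 < L j) {M : ℝ} (hM : 0 < M)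
    {a : Fin n → ℕ} (ha : ∀ j, 0 < a j) {s : ℝ} (hs : 0 ≤ s) :
    ∑ b ∈ windowWords L, Metric.ediam (windowPiece a b M) ^ s ≤
      ENNReal.ofReal ((∏ j, (L j + 1)) * ((contQ n a * ∏ j, L j) ^ 2 * M) ^ (-s)) := by
  set D := (contQ n a * ∏ j, L j) ^ 2 * M
  have D_nonneg : 0 ≤ D := by positivity
  calc ∑ b ∈ windowWords L, Metric.ediam (windowPiece a b M) ^ s
      ≤ (windowWords L).card • ENNReal.ofReal D⁻¹ ^ s :=
        Finset.sum_le_card_nsmul _ _ _ fun b hb ↦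
          ENNReal.rpow_le_rpow (ediam_windowPiece_le hL hM ha hb) hs
    _ = ENNReal.ofReal ((windowWords L).card * D ^ (-s)) := by
        rw [ENNReal.ofReal_rpow_of_nonneg (inv_nonneg.2 D_nonneg) hs, Real.inv_rpow D_nonneg,
          ← Real.rpow_neg D_nonneg, nsmul_eq_mul, ENNReal.ofReal_mul (by positivity),
          ENNReal.ofReal_natCast]
    _ ≤ _ := by
        gcongr
        exact card_windowWords_le fun j ↦ (hL j).le

end Windows

section GeometricWindows

variable {i : ℕ} {A c : ℕ → ℝ}

lemma prod_mul_pow_add_one_le (hA : ∀ j < i, 1 ≤ A j) (hc : ∀ j < i, 0 < c j)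
    (n : ℕ) :
    ∏ j ∈ Finset.range i, (c j * A j ^ n + 1) ≤
      (∏ j ∈ Finset.range i, (c j + 1)) * (∏ j ∈ Finset.range i, A j) ^ n := by
  rw [← Finset.prod_pow, ← Finset.prod_mul_distrib]
  refine Finset.prod_le_prod (fun j hj ↦ ?_) fun j hj ↦ ?_
  all_goals
    have one_le_pow := one_le_pow₀ (hA j (Finset.mem_range.1 hj)) (n := n)
    have c_pos := hc j (Finset.mem_range.1 hj)
  · positivity
  · linarith

-- The weight `B₂ ^ ((1 - s) * n)` of the pressure sum appears here: the number of window words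
-- contributes `B₂ ^ n` and the diameters contribute `B₂ ^ (-s * n)`.
lemma exists_prod_mul_rpow_le (hA : ∀ j ≤ i, 1 ≤ A j) (hc : ∀ j ≤ i, 0 < c j) (s : ℝ) :
    ∃ C : ℝ, 0 ≤ C ∧ ∀ (n : ℕ) (q : ℝ), 0 < q →
      (∏ j ∈ Finset.range i, (c j * A j ^ (n + 1) + 1)) *
        ((q * ∏ j ∈ Finset.range i, c j * A j ^ (n + 1)) ^ 2 * (c i * A i ^ (n + 1))) ^ (-s) ≤
      C * ((∏ j ∈ Finset.range i, A j) ^ ((1 - s) * n) *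
        ((∏ j ∈ Finset.range (i + 1), A j) ^ n * q ^ 2) ^ (-s)) := by
  have A_pos (j : ℕ) (hj : j ≤ i) : 0 < A j := zero_lt_one.trans_le (hA j hj)
  set B := ∏ j ∈ Finset.range i, A j with hB
  set d := ∏ j ∈ Finset.range i, c j with hd
  set e := ∏ j ∈ Finset.range i, (c j + 1)
  have B_pos : 0 < B := Finset.prod_pos fun j hj ↦ A_pos j (Finset.mem_range.1 hj).le
  have d_pos : 0 < d := Finset.prod_pos fun j hj ↦ hc j (Finset.mem_range.1 hj).le
  have e_pos : 0 < e := Finset.prod_pos fun j hj ↦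
    add_pos (hc j (Finset.mem_range.1 hj).le) one_pos
  have Ai_pos := A_pos i le_rfl
  have ci_pos := hc i le_rfl
  set K := (d * B) ^ 2 * (c i * A i)
  have K_pos : 0 < K := by positivity
  refine ⟨e * B * K ^ (-s), by positivity, fun n q hq ↦ ?_⟩
  rw [Finset.prod_range_succ, ← hB, Finset.prod_mul_distrib, Finset.prod_pow, ← hB, ← hd]
  have count_le : ∏ j ∈ Finset.range i, (c j * A j ^ (n + 1) + 1) ≤ e * B ^ (n + 1) :=
    prod_mul_pow_add_one_le (fun j hj ↦ hA j hj.le) (fun j hj ↦ hc j hj.le) (n + 1)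
  have scale_eq : (q * (d * B ^ (n + 1))) ^ 2 * (c i * A i ^ (n + 1)) =
      K * (B ^ n * ((B * A i) ^ n * q ^ 2)) := by ring
  have weight_eq : B ^ n * (B ^ n) ^ (-s) = B ^ ((1 - s) * n) := by
    rw [← Real.rpow_natCast, ← Real.rpow_mul B_pos.le, ← Real.rpow_add B_pos]
    ring_nf
  have rpow_eq (x : ℝ) (hx : 0 ≤ x) :
      (K * (B ^ n * x)) ^ (-s) = K ^ (-s) * ((B ^ n) ^ (-s) * x ^ (-s)) := by
    rw [Real.mul_rpow K_pos.le (by positivity), Real.mul_rpow (by positivity) hx]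
  rw [scale_eq, rpow_eq _ (by positivity), ← weight_eq]
  refine (mul_le_mul_of_nonneg_right count_le (by positivity)).trans_eq ?_
  ring

/-- The cover, at stage `n`, of the numbers whose partial quotients `a_{n+1}, …, a_{n+i}` lie in the
windows with lower ends `c j * A j ^ (n + 1)` and which satisfy
`c i * A i ^ (n + 1) ≤ a_{n+i+1}`: the pieces are indexed by the first `n + i` partial
quotients. -/
def stagePiece (A c : ℕ → ℝ) (i n : ℕ)
    (p : (Fin n → ℕ+) × windowWords fun j : Fin i ↦ c j * A j ^ (n + 1)) : Set ℝ :=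
  windowPiece (fun j ↦ (p.1 j : ℕ)) (p.2 : Fin i → ℕ) (c i * A i ^ (n + 1))

lemma exists_tsum_ediam_stagePiece_rpow_le (hA : ∀ j ≤ i, 1 ≤ A j) (hc : ∀ j ≤ i, 0 < c j)
    {s : ℝ} (hs : 0 ≤ s) :
    ∃ C : ℝ≥0∞, C ≠ ∞ ∧ ∀ n, ∑' p, Metric.ediam (stagePiece A c i n p) ^ s ≤
      C * wordSum (∏ j ∈ Finset.range (i + 1), A j) (∏ j ∈ Finset.range i, A j) s n := by
  obtain ⟨C, C_nonneg, hC⟩ := exists_prod_mul_rpow_le hA hc s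
  refine ⟨ENNReal.ofReal C, ENNReal.ofReal_ne_top, fun n ↦ ?_⟩
  have level_pos (j : ℕ) (hj : j ≤ i) : 0 < c j * A j ^ (n + 1) :=
    mul_pos (hc j hj) (pow_pos (zero_lt_one.trans_le (hA j hj)) _)
  rw [ENNReal.tsum_prod', wordSum, ← ENNReal.tsum_mul_left]
  refine ENNReal.tsum_le_tsum fun a ↦ ?_
  have a_pos (j : Fin n) : 0 < (a j : ℕ) := (a j).pos
  have q_pos : (0 : ℝ) < contQ n fun j ↦ (a j : ℕ) := mod_cast contQ_pos a_pos
  have sum_le := sum_ediam_windowPiece_rpow_le (L := fun j : Fin i ↦ c j * A j ^ (n + 1))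
    (fun j ↦ level_pos j j.is_lt.le) (level_pos i le_rfl) a_pos hs
  rw [← ENNReal.ofReal_mul C_nonneg]
  refine (Finset.tsum_subtype _ _).trans_le (sum_le.trans (ENNReal.ofReal_le_ofReal ?_))
  rw [Fin.prod_univ_eq_prod_range (fun j ↦ c j * A j ^ (n + 1) + 1),
    Fin.prod_univ_eq_prod_range fun j ↦ c j * A j ^ (n + 1)]
  exact hC n _ q_pos

lemma mem_iUnion_stagePiece {n : ℕ} {x : ℝ} (hx : x ∈ unitIrrationals)
    (hwindow : ∀ j < i, c j * A j ^ (n + 1) ≤ (pq x (n + 1 + j) : ℝ) ∧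
      (pq x (n + 1 + j) : ℝ) < 2 * (c j * A j ^ (n + 1)))
    (hlast : c i * A i ^ (n + 1) ≤ pq x (n + 1 + i)) :
    x ∈ ⋃ p, stagePiece A c i n p := by
  have digits_mem : (fun j : Fin i ↦ pq x (n + 1 + j)) ∈
      windowWords fun j : Fin i ↦ c j * A j ^ (n + 1) :=
    mem_windowWords.2 fun j ↦ hwindow j j.is_lt
  refine mem_iUnion.2 ⟨(fun j ↦ ⟨pq x (j + 1), pq_succ_pos hx j⟩, ⟨_, digits_mem⟩), ⟨hx, ?_⟩, ?_⟩
  · refine Fin.addCases (fun j ↦ ?_) fun j ↦ ?_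
    · rw [Fin.append_left]; rfl
    · rw [Fin.append_right, Fin.val_natAdd, add_right_comm]
  · rwa [add_right_comm] at hlast

end GeometricWindows

/-- The set `S_m`: the irrational numbers of the unit interval for which, for infinitely many `n`,
every partial quotient `a_{n+i}` with `i < m` lies in the window
`[c i * A i ^ n, 2 * (c i * A i ^ n))`. -/
def windowSet (m : ℕ) (A c : ℕ → ℝ) : Set ℝ :=
  {x | x ∈ Ioo (0 : ℝ) 1 ∧ Irrational x ∧
    {n : ℕ | ∀ i < m, c i * A i ^ n ≤ (pq x (n + i) : ℝ) ∧
      (pq x (n + i) : ℝ) < 2 * (c i * A i ^ n)}.Infinite}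

section WindowSet

variable {m i : ℕ} {A c : ℕ → ℝ}

lemma windowSet_subset_limsup (hi : i < m) :
    windowSet m A c ⊆ limsup (fun n ↦ ⋃ p, stagePiece A c i n p) atTop := by
  rintro x ⟨hx, x_irrational, infinitely_often⟩
  have frequently_window := Nat.frequently_atTop_iff_infinite.2 infinitely_often
  rw [← map_add_atTop_eq_nat 1, frequently_map] at frequently_window
  refine mem_limsup_iff_frequently_mem.2 (frequently_window.mono fun n hn ↦ ?_)
  exact mem_iUnion_stagePiece ⟨hx, x_irrational⟩ (fun j hj ↦ hn j (hj.trans hi)) (hn i hi).1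

lemma dimH_windowSet_le_dimNum (hi : i < m) (hA : ∀ j ≤ i, 1 ≤ A j) (hc : ∀ j ≤ i, 0 < c j) :
    dimH (windowSet m A c) ≤ ENNReal.ofReal (dimNum A i) := by
  refine le_of_forall_gt_imp_ge_of_dense fun r hr ↦ ?_
  obtain ⟨s, dim_lt_s, s_lt_r⟩ := ENNReal.lt_iff_exists_nnreal_btwn.1 hr
  refine le_trans ?_ s_lt_r.le
  have s_pos : 0 < s := ENNReal.coe_pos.1 (zero_le.trans_lt dim_lt_s)
  have gExp_lt : gExp (∏ j ∈ Finset.range (i + 1), A j) (∏ j ∈ Finset.range i, A j) < s := by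
    rw [← dimNum_eq_gExp]
    exact (Real.le_coe_toNNReal _).trans_lt (NNReal.coe_lt_coe.2 (ENNReal.coe_lt_coe.1 dim_lt_s))
  obtain ⟨C, C_ne_top, tsum_le⟩ := exists_tsum_ediam_stagePiece_rpow_le hA hc s.2
  refine (dimH_mono (windowSet_subset_limsup hi)).trans (dimH_limsup_iUnion_le s_pos ?_)
  refine (expGrowthSup_le_of_eventually_le C_ne_top (.of_forall tsum_le)).trans_lt ?_
  exact expGrowthSup_wordSum_neg
    (Finset.one_le_prod fun j hj ↦ hA j (Finset.mem_range_succ_iff.1 hj))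
    (Finset.one_le_prod fun j hj ↦ hA j (Finset.mem_range.1 hj).le) gExp_lt

end WindowSet

theorem hausdorff_dim_Sm_upper_general (m : ℕ) (hm : 1 ≤ m) (A c : ℕ → ℝ)
    (hA : ∀ i < m, 1 ≤ A i) (hc : ∀ i < m, 0 < c i) :
    dimH (windowSet m A c) ≤ ENNReal.ofReal ((Finset.range m).inf'
      (Finset.nonempty_range_iff.2 (Nat.one_le_iff_ne_zero.1 hm)) (dimNum A)) := by
  obtain ⟨i, hi, inf_eq⟩ := Finset.exists_mem_eq_inf'
    (Finset.nonempty_range_iff.2 (Nat.one_le_iff_ne_zero.1 hm)) (dimNum A)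
  have i_lt := Finset.mem_range.1 hi
  rw [inf_eq]
  exact dimH_windowSet_le_dimNum i_lt (fun j hj ↦ hA j (hj.trans_lt i_lt))
    fun j hj ↦ hc j (hj.trans_lt i_lt)

theorem hausdorff_dim_Sm_upper (m : ℕ) (hm : 1 ≤ m) (A c : ℕ → ℝ)
    (hA : ∀ i < m, 1 < A i) (hc : ∀ i < m, 0 < c i) :
    dimH {x : ℝ | x ∈ Set.Ioo (0 : ℝ) 1 ∧ Irrational x ∧
      {n : ℕ | ∀ i < m, c i * A i ^ n ≤ (pq x (n + i) : ℝ) ∧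
        (pq x (n + i) : ℝ) < 2 * (c i * A i ^ n)}.Infinite} ≤
    ENNReal.ofReal
      ((Finset.range m).inf' (Finset.nonempty_range_iff.mpr (by omega)) (dimNum A)) :=
  hausdorff_dim_Sm_upper_general m hm A c (fun i hi ↦ (hA i hi).le) hc
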